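/- Let C be a bounded cochain complex of finite-dimensional real vector spaces indexed by the natural numbers, vanishing in degrees ≥ N, and let f : C → C be a chain map such that each f^i is a linear automorphism of C^i. Let H^i(f) denote the induced linear automorphism of the i-th cohomology H^i(C) = ker(d^i)/im(d^{i-1}). Then the alternating product of the determinants of f equals the alternating product of the determinants of the induced maps on cohomology: ∏_{i<N} det(f^i)^{(-1)^i} = ∏_{i<N} det(H^i(f))^{(-1)^i}; equivalently, ∏_{even i<N} det(f^i) · ∏_{odd i<N} det(H^i(f)) = ∏_{odd i<N} det(f^i) · ∏_{even i<N} det(H^i(f)). -/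

import Mathlib

/-- A cochain complex of real vector spaces indexed by the natural numbers. -/
structure CochainComplexNat where
  X : ℕ → Type
  [addCommGroup : ∀ i, AddCommGroup (X i)]
  [module : ∀ i, Module ℝ (X i)]
  d : ∀ i, X i →ₗ[ℝ] X (i + 1)
  d_comp_d : ∀ i, (d (i + 1)).comp (d i) = 0

attribute [instance] CochainComplexNat.addCommGroup CochainComplexNat.module

/-- A chain map between ℕ-indexed cochain complexes: a family of linear maps
commuting with the differentials. -/
structure ChainMap (C₁ C₂ : CochainComplexNat) where
  f : ∀ i, C₁.X i →ₗ[ℝ] C₂.X i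
  comm : ∀ i, (C₂.d i).comp (f i) = (f (i + 1)).comp (C₁.d i)

/-- The identity chain map. -/
def ChainMap.id (C : CochainComplexNat) : ChainMap C C where
  f _ := LinearMap.id
  comm _ := by simp

/-- Composition of chain maps. -/
def ChainMap.comp {C₁ C₂ C₃ : CochainComplexNat} (G : ChainMap C₂ C₃) (F : ChainMap C₁ C₂) :
    ChainMap C₁ C₃ where
  f i := (G.f i).comp (F.f i)
  comm i := by
    ext v
    have h₁ := LinearMap.congr_fun (F.comm i) v
    have h₂ := LinearMap.congr_fun (G.comm i) (F.f i v)
    simp only [LinearMap.comp_apply] at h₁ h₂ ⊢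
    rw [h₂, h₁]

/-- `Homotopic F G` : there exists a chain homotopy `Φ` from `F` to `G`, i.e. a family of
linear maps one degree down (with `Φ^0 = 0`, implemented by letting `Φ i : C₁^{i+1} → C₂^i`
play the role of `Φ^{i+1}`) with `G - F = d ∘ Φ + Φ ∘ d` in every degree. -/
def Homotopic {C₁ C₂ : CochainComplexNat} (F G : ChainMap C₁ C₂) : Prop :=
  ∃ Φ : ∀ i, C₁.X (i + 1) →ₗ[ℝ] C₂.X i,
    (G.f 0 - F.f 0 = (Φ 0).comp (C₁.d 0)) ∧
    ∀ i, G.f (i + 1) - F.f (i + 1) = (C₂.d i).comp (Φ i) + (Φ (i + 1)).comp (C₁.d (i + 1))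

/-- A chain map is a homotopy equivalence if it has a chain-homotopy inverse. -/
def IsHomotopyEquiv {C₁ C₂ : CochainComplexNat} (F : ChainMap C₁ C₂) : Prop :=
  ∃ G : ChainMap C₂ C₁,
    Homotopic (G.comp F) (ChainMap.id C₁) ∧ Homotopic (F.comp G) (ChainMap.id C₂)

/-- The cocycles `Z^i = ker d^i`. -/
def cocycles (C : CochainComplexNat) (i : ℕ) : Submodule ℝ (C.X i) :=
  LinearMap.ker (C.d i)

/-- The coboundaries `B^i = im d^{i-1}`, with `B^0 = 0` (i.e. `d^{-1} = 0`). -/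
def coboundaries (C : CochainComplexNat) : (i : ℕ) → Submodule ℝ (C.X i)
  | 0 => ⊥
  | (i + 1) => LinearMap.range (C.d i)

/-- The `i`-th cohomology `H^i(C) = ker d^i / im d^{i-1}`. -/
abbrev cohomology (C : CochainComplexNat) (i : ℕ) : Type :=
  cocycles C i ⧸ (coboundaries C i).comap (cocycles C i).subtype

/-- A chain map `F : C → C` preserves cocycles. -/
theorem chainMap_mem_cocycles {C : CochainComplexNat} (F : ChainMap C C) (i : ℕ) :
    ∀ v ∈ cocycles C i, F.f i v ∈ cocycles C i := by
  intro v hv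
  have hc := LinearMap.congr_fun (F.comm i) v
  simp only [LinearMap.comp_apply] at hc
  simp only [cocycles, LinearMap.mem_ker] at hv ⊢
  rw [hc, hv, map_zero]

/-- The linear map induced on `i`-th cohomology by a chain map `F : C → C`. -/
def ChainMap.cohomologyMap {C : CochainComplexNat} (F : ChainMap C C) (i : ℕ) :
    cohomology C i →ₗ[ℝ] cohomology C i :=
  Submodule.mapQ _ _ ((F.f i).restrict (chainMap_mem_cocycles F i))
    (by
      intro v hv
      simp only [Submodule.mem_comap, Submodule.subtype_apply, LinearMap.restrict_apply] at hv ⊢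
      match i, v, hv with
      | 0, v, hv =>
        simp only [coboundaries, Submodule.mem_bot] at hv ⊢
        rw [hv, map_zero]
      | (i + 1), v, hv =>
        simp only [coboundaries, LinearMap.mem_range] at hv ⊢
        obtain ⟨w, hw⟩ := hv
        refine ⟨F.f i w, ?_⟩
        have hc := LinearMap.congr_fun (F.comm i) w
        simp only [LinearMap.comp_apply] at hc
        rw [hc, hw])

/-- Intertwined endomorphisms of isomorphic modules have equal determinants. -/
theorem LinearMap.det_eq_of_intertwine {K V W : Type*} [CommRing K] [AddCommGroup V] [Module K V]
    [AddCommGroup W] [Module K W] (e : V ≃ₗ[K] W) (f : V →ₗ[K] V) (g : W →ₗ[K] W)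
    (h : ∀ v, e (f v) = g (e v)) : LinearMap.det f = LinearMap.det g := by
  rw [← LinearMap.det_conj f e]
  congr 1
  ext w
  simp [h]

/-- A chain map `F : C → C` preserves coboundaries. -/
theorem chainMap_mem_coboundaries {C : CochainComplexNat} (F : ChainMap C C) (i : ℕ) :
    ∀ v ∈ coboundaries C i, F.f i v ∈ coboundaries C i := by
  cases i with
  | zero =>
    intro v hv
    simp only [coboundaries, Submodule.mem_bot] at hv ⊢
    rw [hv, map_zero]
  | succ i =>
    rintro _ ⟨w, rfl⟩
    exact ⟨F.f i w, LinearMap.congr_fun (F.comm i) w⟩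

/-- Every coboundary is a cocycle. -/
theorem coboundaries_le_cocycles (C : CochainComplexNat) (i : ℕ) :
    coboundaries C i ≤ cocycles C i := by
  cases i with
  | zero => exact bot_le
  | succ i =>
    rintro _ ⟨w, rfl⟩
    exact LinearMap.congr_fun (C.d_comp_d i) w

/-- The restriction of a chain map `F : C → C` to the coboundaries. -/
def ChainMap.coboundariesMap {C : CochainComplexNat} (F : ChainMap C C) (i : ℕ) :
    coboundaries C i →ₗ[ℝ] coboundaries C i :=
  (F.f i).restrict (chainMap_mem_coboundaries F i)

/-- On cocycles, `det F = det F|_B * det H(F)`. -/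
theorem ChainMap.det_restrict_cocycles {C : CochainComplexNat} [∀ i, FiniteDimensional ℝ (C.X i)]
    (F : ChainMap C C) (i : ℕ) :
    LinearMap.det ((F.f i).restrict (chainMap_mem_cocycles F i)) =
      LinearMap.det (F.coboundariesMap i) * LinearMap.det (F.cohomologyMap i) := by
  rw [LinearMap.det_eq_det_mul_det ((coboundaries C i).comap (cocycles C i).subtype)
    ((F.f i).restrict (chainMap_mem_cocycles F i))
    (fun v hv => chainMap_mem_coboundaries F i v hv)]
  congr 1
  exact LinearMap.det_eq_of_intertwine
    (Submodule.comapSubtypeEquivOfLe (coboundaries_le_cocycles C i)) _ _ fun _ => rfl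

/-- The isomorphism `C^i / Z^i ≃ B^{i+1}` is compatible with chain maps, so that
`det F^i = det F|_{B^i} * det H^i(F) * det F|_{B^{i+1}}`. -/
theorem ChainMap.det_eq_coboundaries_mul_cohomology {C : CochainComplexNat}
    [∀ i, FiniteDimensional ℝ (C.X i)] (F : ChainMap C C) (i : ℕ) :
    LinearMap.det (F.f i) =
      LinearMap.det (F.coboundariesMap i) * LinearMap.det (F.cohomologyMap i) *
        LinearMap.det (F.coboundariesMap (i + 1)) := by
  rw [LinearMap.det_eq_det_mul_det (cocycles C i) (F.f i) (chainMap_mem_cocycles F i),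
    ← F.det_restrict_cocycles i]
  congr 1
  refine LinearMap.det_eq_of_intertwine (C.d i).quotKerEquivRange _ _ fun v => ?_
  induction v using Submodule.Quotient.induction_on with
  | H v => exact Subtype.ext (LinearMap.congr_fun (F.comm i) v)

/-- Telescoping of an alternating product whose factors are `b i * h i * b (i + 1)`. -/
theorem alternating_prod_telescope {K : Type*} [Field K] {a b h : ℕ → K}
    (hb : ∀ i, b i ≠ 0) (hb₀ : b 0 = 1) (hab : ∀ i, a i = b i * h i * b (i + 1)) (n : ℕ) :
    (∏ i ∈ Finset.range n, a i ^ ((-1 : ℤ) ^ i)) * b n ^ ((-1 : ℤ) ^ n) =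
      ∏ i ∈ Finset.range n, h i ^ ((-1 : ℤ) ^ i) := by
  induction n with
  | zero => simp [hb₀]
  | succ n ih =>
    rw [Finset.prod_range_succ, Finset.prod_range_succ, ← ih, hab n, mul_zpow, mul_zpow, pow_succ,
      mul_neg_one, zpow_neg]
    have := zpow_ne_zero ((-1 : ℤ) ^ n) (hb (n + 1))
    field_simp

/-- An alternating product is the quotient of its even part by its odd part. -/
theorem alternating_prod_eq_div {K : Type*} [Field K] (a : ℕ → K) (s : Finset ℕ) :
    ∏ i ∈ s, a i ^ ((-1 : ℤ) ^ i) =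
      (∏ i ∈ s.filter (fun i => Even i), a i) / ∏ i ∈ s.filter (fun i => ¬ Even i), a i := by
  rw [← Finset.prod_filter_mul_prod_filter_not s (fun i => Even i), div_eq_mul_inv,
    ← Finset.prod_inv_distrib]
  congr 1 <;> refine Finset.prod_congr rfl fun i hi => ?_
  · rw [(Finset.mem_filter.mp hi).2.neg_one_pow, zpow_one]
  · rw [(Nat.not_even_iff_odd.mp (Finset.mem_filter.mp hi).2).neg_one_pow, zpow_neg_one]

/-- If `C` is a bounded cochain complex of finite-dimensional real vector
spaces vanishing in degrees `≥ N`, and `F : C → C` is a chain map with each `F^i` a linear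
automorphism, then the alternating product of the determinants of `F` equals the alternating
product of the determinants of the induced maps on cohomology. -/
theorem alternating_det_eq_alternating_det_cohomology
    (C : CochainComplexNat) [∀ i, FiniteDimensional ℝ (C.X i)]
    (N : ℕ) (hbd : ∀ i, N ≤ i → ∀ v : C.X i, v = 0)
    (F : ChainMap C C) (hbij : ∀ i, Function.Bijective (F.f i)) :
    (∏ i ∈ Finset.range N, LinearMap.det (F.f i) ^ ((-1 : ℤ) ^ i) =
      ∏ i ∈ Finset.range N, LinearMap.det (F.cohomologyMap i) ^ ((-1 : ℤ) ^ i)) ∧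
    ((∏ i ∈ (Finset.range N).filter (fun i => Even i), LinearMap.det (F.f i)) *
        (∏ i ∈ (Finset.range N).filter (fun i => ¬ Even i),
          LinearMap.det (F.cohomologyMap i)) =
      (∏ i ∈ (Finset.range N).filter (fun i => ¬ Even i), LinearMap.det (F.f i)) *
        (∏ i ∈ (Finset.range N).filter (fun i => Even i),
          LinearMap.det (F.cohomologyMap i))) := by
  have hf (i : ℕ) : LinearMap.det (F.f i) ≠ 0 :=
    (LinearEquiv.ofBijective (F.f i) (hbij i)).isUnit_det'.ne_zero
  have hdet := F.det_eq_coboundaries_mul_cohomology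
  have hb (i : ℕ) : LinearMap.det (F.coboundariesMap i) ≠ 0 := fun h =>
    hf i (by rw [hdet, h, zero_mul, zero_mul])
  have hh (i : ℕ) : LinearMap.det (F.cohomologyMap i) ≠ 0 := fun h =>
    hf i (by rw [hdet, h, mul_zero, zero_mul])
  have hb₀ : LinearMap.det (F.coboundariesMap 0) = 1 :=
    have : Subsingleton (coboundaries C 0) :=
      inferInstanceAs (Subsingleton (⊥ : Submodule ℝ (C.X 0)))
    LinearMap.det_eq_one_of_subsingleton _
  have hbN : LinearMap.det (F.coboundariesMap N) = 1 :=
    have : Subsingleton (C.X N) := subsingleton_of_forall_eq 0 (hbd N le_rfl)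
    LinearMap.det_eq_one_of_subsingleton _
  have key := alternating_prod_telescope hb hb₀ hdet N
  rw [hbN, one_zpow, mul_one] at key
  refine ⟨key, ?_⟩
  rw [alternating_prod_eq_div, alternating_prod_eq_div,
    div_eq_div_iff (Finset.prod_ne_zero_iff.mpr fun i _ => hf i)
      (Finset.prod_ne_zero_iff.mpr fun i _ => hh i)] at key
  rw [key, mul_comm]
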